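/- If 0 ≤ a ≤ 1 < b ≤ 3, then (1/(4π))∫_a^b f(t) dt = μ_ST([√(1+a)/2, √(1+b)/2]) + μ_ST([0, √(1−a)/2]). -/

import Mathlib

noncomputable section

/-- The `O(3)` (Batman) density function. -/
def fBat (t : ℝ) : ℝ :=
  if 1 < |t| ∧ |t| < 3 then Real.sqrt ((3 - |t|) / (1 + |t|))
  else if |t| < 1 then Real.sqrt ((3 - t) / (1 + t)) + Real.sqrt ((3 + t) / (1 - t))
  else 0

/-- The semicircular (Sato–Tate) measure of `[a,b]`. -/
def muST (a b : ℝ) : ℝ := (2 / Real.pi) * ∫ x in a..b, Real.sqrt (1 - x ^ 2)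

def GG (x : ℝ) : ℝ := ∫ s in (0:ℝ)..x, Real.sqrt (1 - s ^ 2)

def FF (t : ℝ) : ℝ := 8 * (GG (Real.sqrt (1 + t) / 2) - GG (Real.sqrt (1 - t) / 2))

lemma cont_sq : Continuous (fun s : ℝ => Real.sqrt (1 - s ^ 2)) := by fun_prop

lemma GG_deriv (x : ℝ) : HasDerivAt GG (Real.sqrt (1 - x ^ 2)) x :=
  cont_sq.integral_hasStrictDerivAt 0 x |>.hasDerivAt

lemma GG_cont : Continuous GG :=
  continuous_iff_continuousAt.2 fun x => (GG_deriv x).continuousAt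

lemma FF_cont : Continuous FF := by
  have := GG_cont
  unfold FF
  fun_prop

lemma muST_eq (a b : ℝ) : muST a b = 2 / Real.pi * (GG b - GG a) := by
  unfold muST GG
  rw [intervalIntegral.integral_interval_sub_left] <;> exact cont_sq.intervalIntegrable _ _

lemma key (u : ℝ) (hu : 0 < u) :
    HasDerivAt (fun v : ℝ => GG (Real.sqrt v / 2)) (Real.sqrt ((4 - u) / u) / 8) u := by
  have h1 : HasDerivAt (fun v : ℝ => Real.sqrt v / 2) (1 / (2 * Real.sqrt u) / 2) u :=
    (Real.hasDerivAt_sqrt hu.ne').div_const 2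
  have h2 := (GG_deriv (Real.sqrt u / 2)).comp u h1
  refine HasDerivAt.congr_deriv (f := fun v : ℝ => GG (Real.sqrt v / 2)) h2 ?_
  have h3 : 1 - (Real.sqrt u / 2) ^ 2 = (4 - u) / 4 := by
    rw [div_pow, Real.sq_sqrt hu.le]; ring
  have h4 : Real.sqrt 4 = 2 := by
    rw [show (4:ℝ) = 2 ^ 2 by norm_num]; exact Real.sqrt_sq (by norm_num)
  rw [h3, Real.sqrt_div' _ hu.le, Real.sqrt_div' _ (by norm_num : (0:ℝ) ≤ 4), h4]
  have : Real.sqrt u ≠ 0 := (Real.sqrt_pos.2 hu).ne'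
  field_simp
  norm_num

lemma key_plus (t : ℝ) (ht : -1 < t) :
    HasDerivAt (fun v : ℝ => GG (Real.sqrt (1 + v) / 2)) (Real.sqrt ((3 - t) / (1 + t)) / 8) t := by
  have h := (key (1 + t) (by linarith)).comp_const_add 1 t
  rwa [show 4 - (1 + t) = 3 - t by ring] at h

lemma key_minus (t : ℝ) (ht : t < 1) :
    HasDerivAt (fun v : ℝ => GG (Real.sqrt (1 - v) / 2))
      (-(Real.sqrt ((3 + t) / (1 - t)) / 8)) t := by
  have h := (key (1 - t) (by linarith)).comp_const_sub 1 t
  rwa [show 4 - (1 - t) = 3 + t by ring] at h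

lemma key_zero (t : ℝ) (ht : 1 < t) :
    HasDerivAt (fun v : ℝ => GG (Real.sqrt (1 - v) / 2)) 0 t := by
  refine (hasDerivAt_const t (GG 0)).congr_of_eventuallyEq ?_
  filter_upwards [lt_mem_nhds ht] with v hv
  rw [Real.sqrt_eq_zero_of_nonpos (by linarith), zero_div]

lemma FF_deriv1 (t : ℝ) (h0 : 0 < t) (h1 : t < 1) : HasDerivAt FF (fBat t) t := by
  have h := ((key_plus t (by linarith)).sub (key_minus t h1)).const_mul 8
  refine HasDerivAt.congr_deriv (f := FF) h ?_
  unfold fBat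
  rw [abs_of_pos h0, if_neg (by intro h; linarith [h.1]), if_pos h1]
  ring

lemma FF_deriv2 (t : ℝ) (h0 : 1 < t) (h1 : t < 3) : HasDerivAt FF (fBat t) t := by
  have h := ((key_plus t (by linarith)).sub (key_zero t h0)).const_mul 8
  refine HasDerivAt.congr_deriv (f := FF) h ?_
  unfold fBat
  rw [abs_of_pos (by linarith), if_pos ⟨h0, h1⟩]
  ring

lemma fBat_nonneg (t : ℝ) : 0 ≤ fBat t := by
  unfold fBat
  split_ifs <;> positivity

lemma ftc (a b : ℝ) (hab : a ≤ b) (h : ∀ x ∈ Set.Ioo a b, HasDerivAt FF (fBat x) x) :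
    IntervalIntegrable fBat MeasureTheory.volume a b ∧ ∫ t in a..b, fBat t = FF b - FF a := by
  have hi : IntervalIntegrable fBat MeasureTheory.volume a b := by
    apply intervalIntegral.intervalIntegrable_deriv_of_nonneg FF_cont.continuousOn
    · rwa [min_eq_left hab, max_eq_right hab]
    · exact fun x _ => fBat_nonneg x
  exact ⟨hi, intervalIntegral.integral_eq_sub_of_hasDerivAt_of_le hab FF_cont.continuousOn h hi⟩

theorem batman_as_semicircle_mid (a b : ℝ) (ha : 0 ≤ a) (ha1 : a ≤ 1) (hb1 : 1 < b)
    (hb : b ≤ 3) :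
    (1 / (4 * Real.pi)) * ∫ t in a..b, fBat t
      = muST (Real.sqrt (1 + a) / 2) (Real.sqrt (1 + b) / 2)
        + muST 0 (Real.sqrt (1 - a) / 2) := by
  obtain ⟨i1, e1⟩ := ftc a 1 ha1 fun x hx => FF_deriv1 x (by linarith [hx.1]) hx.2
  obtain ⟨i2, e2⟩ := ftc 1 b hb1.le fun x hx => FF_deriv2 x hx.1 (by linarith [hx.2])
  rw [← intervalIntegral.integral_add_adjacent_intervals i1 i2, e1, e2, muST_eq, muST_eq]
  have h0 : GG 0 = 0 := by simp [GG]
  have hb0 : Real.sqrt (1 - b) = 0 := Real.sqrt_eq_zero_of_nonpos (by linarith)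
  unfold FF
  rw [hb0, zero_div, h0]
  have := Real.pi_ne_zero
  field_simp
  ring

end
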